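/- Let n > 7 be an integer and let p be a prime with n/2 < p < n − 2. Let y ∈ A_n be an element of order p, and let x ∈ A_n be a permutation whose cycle type is {n} if n is odd, and {n/2, n/2} if n is even. Then for all g, h ∈ A_n, the subgroup of A_n generated by g⁻¹xg and h⁻¹yh is all of A_n. -/

import Mathlib

/-!
As `n < 2p`, the element `y` is a `p`-cycle, and each cycle of `x` is longer than `n - p`, so it
meets the support of `y`. Hence every subgroup `G` containing a conjugate of each of `x` and `y` is
transitive, and it is primitive because it contains a `p`-cycle `c` with `p > n / 2`.

It remains to prove Jordan's theorem that a primitive group `G` containing a `p`-cycle `c` with at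
least three fixed points contains the alternating group. Since `⟨c⟩` is primitive on the support
of `c`, the group `G` is `(n - p)`-transitive, so every permutation of the fixed points of `c` is
induced by an element of `G`, and by a Frattini argument even by one normalizing `⟨c⟩`. Take such
elements `s`, `t` inducing the transpositions `(u v)`, `(u w)`. As `Aut ⟨c⟩` is abelian, `⁅s, t⁆`
centralizes `c`, so it is the product of a 3-cycle on `u`, `v`, `w` and a power of `c`. Thus `G`
contains a 3-cycle.
-/

section

open Equiv Equiv.Perm MulAction
open scoped commutatorElement Finset

theorem commutatorElement_mem_centralizer_of_mem_normalizer {G : Type*} [Group G]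
    {H : Subgroup G} [IsCyclic H] {s t : G} (hs : s ∈ Subgroup.normalizer (H : Set G))
    (ht : t ∈ Subgroup.normalizer (H : Set G)) : ⁅s, t⁆ ∈ Subgroup.centralizer (H : Set G) := by
  have hcomm : ⁅H.normalizerMonoidHom ⟨s, hs⟩, H.normalizerMonoidHom ⟨t, ht⟩⁆ = 1 :=
    (IsCyclic.mulAutMulEquiv H).injective <| by
      rw [map_commutatorElement, map_one, commutatorElement_eq_one_iff_mul_comm, mul_comm]
  rwa [← map_commutatorElement, ← MonoidHom.mem_ker, Subgroup.normalizerMonoidHom_ker,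
    Subgroup.mem_subgroupOf] at hcomm

theorem exists_mem_zpowers_conj_eq_of_not_sq_dvd_card {G : Type*} [Group G] {K : Subgroup G}
    [Finite K] {p : ℕ} (hp : p.Prime) (hK : ¬ p ^ 2 ∣ Nat.card K) {y z : G} (hy : y ∈ K)
    (hz : z ∈ K) (hyp : orderOf y = p) (hzp : orderOf z = p) :
    ∃ k ∈ K, Subgroup.zpowers (k * z * k⁻¹) = Subgroup.zpowers y := by
  have : Fact p.Prime := ⟨hp⟩
  have sylow (u : K) (hu : orderOf u = p) :
      ∃ P : Sylow p K, (P : Subgroup K) = Subgroup.zpowers u := by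
    have hcard : Nat.card (Subgroup.zpowers u) = p := by rw [Nat.card_zpowers, hu]
    have hindex : ¬ p ∣ (Subgroup.zpowers u).index := fun hdvd ↦ hK <| by
      rw [← (Subgroup.zpowers u).card_mul_index, hcard, sq]
      exact Nat.mul_dvd_mul_left p hdvd
    exact ⟨(IsPGroup.of_card (hcard.trans (pow_one p).symm)).toSylow hindex, rfl⟩
  obtain ⟨P, hP⟩ := sylow ⟨y, hy⟩ (by rw [Subgroup.orderOf_mk, hyp])
  obtain ⟨Q, hQ⟩ := sylow ⟨z, hz⟩ (by rw [Subgroup.orderOf_mk, hzp])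
  obtain ⟨k, hk⟩ := exists_smul_eq K Q P
  refine ⟨k, k.2, ?_⟩
  have hconj : Subgroup.zpowers (k * ⟨z, hz⟩ * k⁻¹) = Subgroup.zpowers (⟨y, hy⟩ : K) := by
    rw [← hP, ← hk, Sylow.coe_subgroup_smul, hQ, ← MulAut.conj_apply]
    exact (MonoidHom.map_zpowers (MulAut.conj k).toMonoidHom _).symm
  simpa using! congrArg (Subgroup.map K.subtype) hconj

theorem not_sq_dvd_factorial_of_prime {p : ℕ} (hp : p.Prime) : ¬ p ^ 2 ∣ p.factorial := by
  rw [← Nat.mul_factorial_pred hp.ne_zero, sq, Nat.mul_dvd_mul_iff_left hp.pos,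
    hp.dvd_factorial]
  have := hp.pos
  omega

theorem closure_eq_top_of_le_closure_image {G : Type*} [Group G] {H : Subgroup G} {S : Set H}
    (h : H ≤ Subgroup.closure ((↑) '' S)) : Subgroup.closure S = ⊤ := by
  refine Subgroup.map_injective H.subtype_injective ((Subgroup.map_mono le_top).antisymm ?_)
  rw [MonoidHom.map_closure]
  exact (Subgroup.map_subtype_le ⊤).trans h

theorem card_fixingSubgroup_perm {α : Type*} [Finite α] (s : Set α) :
    Nat.card (fixingSubgroup (Perm α) s) = (Nat.card (sᶜ : Set α)).factorial := by
  classical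
  rw [← Nat.card_perm]
  refine Nat.card_congr (Equiv.trans (Equiv.subtypeEquivRight fun f ↦ ?_)
    (Perm.subtypeEquivSubtypePerm (· ∈ sᶜ)).symm)
  simp [mem_fixingSubgroup_iff]

theorem exists_smul_eq_of_isMultiplyPretransitive {G α : Type*} [Group G] [MulAction G α]
    {s : Set α} [Finite s] (hG : IsMultiplyPretransitive G α s.ncard) (f : s ↪ α) :
    ∃ g : G, ∀ z : s, g • (z : α) = f z := by
  let e : Fin s.ncard ≃ s := (Finite.equivFin s).symm
  obtain ⟨g, hg⟩ := exists_smul_eq G (e.toEmbedding.trans (Function.Embedding.subtype _))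
    (e.toEmbedding.trans f)
  exact ⟨g, fun z ↦ by simpa using! DFunLike.congr_fun hg (e.symm z)⟩

theorem eqOn_commutatorElement {β : Type*} {s t σ τ : Perm β} {F : Set β} (hs : F.EqOn s σ)
    (ht : F.EqOn t τ) (hσ : ∀ z, σ z ∈ F ↔ z ∈ F) (hτ : ∀ z, τ z ∈ F ↔ z ∈ F) :
    F.EqOn (⁅s, t⁆ : Perm β) (⁅σ, τ⁆ : Perm β) := by
  have commutator_apply (f g : Perm β) (z : β) : ⁅f, g⁆ (g (f z)) = f (g z) := by
    simp [commutatorElement_def]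
  intro z hz
  obtain ⟨u, rfl⟩ : ∃ u, τ (σ u) = z := ⟨σ⁻¹ (τ⁻¹ z), by simp⟩
  have hu : u ∈ F := by rwa [hτ, hσ] at hz
  calc ⁅s, t⁆ (τ (σ u)) = ⁅s, t⁆ (t (s u)) := by rw [hs hu, ht ((hσ u).2 hu)]
    _ = s (t u) := commutator_apply s t u
    _ = σ (τ u) := by rw [ht hu, hs ((hτ u).2 hu)]
    _ = ⁅σ, τ⁆ (τ (σ u)) := (commutator_apply σ τ u).symm

variable {α : Type*} [Fintype α] [DecidableEq α] {G : Subgroup (Perm α)} {c d w σ : Perm α}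

theorem inv_mul_mem_zpowers_of_commute (hcyc : c.IsCycle) (hwc : Commute w c)
    (hdc : d.Disjoint c) (hwd : Set.EqOn w d (c.support : Set α)ᶜ) :
    d⁻¹ * w ∈ Subgroup.zpowers c := by
  obtain ⟨hinv, hpow⟩ := hcyc.commute_iff.1 hwc
  suffices w = d * ofSubtype (w.subtypePerm hinv) by rwa [eq_inv_mul_of_mul_eq this.symm] at hpow
  ext z
  by_cases hz : z ∈ c.support
  · rw [mul_apply, ofSubtype_subtypePerm_of_mem hinv hz,
      notMem_support.1 (hdc.symm.mem_imp ((hinv z).2 hz))]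
  · rw [mul_apply, ofSubtype_subtypePerm_of_not_mem hinv hz, hwd hz]

theorem exists_mem_normalizer_zpowers_eqOn (hprime : (#c.support).Prime) (hcyc : c.IsCycle)
    (hcG : c ∈ G) (hG : IsMultiplyPretransitive G α (c.support : Set α)ᶜ.ncard)
    (hσ : σ.Disjoint c) :
    ∃ s ∈ G, s ∈ Subgroup.normalizer (Subgroup.zpowers c : Set (Perm α)) ∧
      Set.EqOn s σ (c.support : Set α)ᶜ := by
  obtain ⟨⟨g, hgG⟩, hg⟩ := exists_smul_eq_of_isMultiplyPretransitive hG
    ((Function.Embedding.subtype _).trans σ.toEmbedding)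
  replace hg : Set.EqOn g σ (c.support : Set α)ᶜ := fun z hz ↦ hg ⟨z, hz⟩
  let N : Subgroup (Perm α) := fixingSubgroup (Perm α) (c.support : Set α)ᶜ
  have hN : ¬ (#c.support) ^ 2 ∣ Nat.card (G ⊓ N : Subgroup (Perm α)) := fun h ↦ by
    have hdvd := h.trans (Subgroup.card_dvd_of_le inf_le_right)
    rw [card_fixingSubgroup_perm, compl_compl, Nat.card_coe_set_eq, Set.ncard_coe_finset] at hdvd
    exact not_sq_dvd_factorial_of_prime hprime hdvd
  have hcN : c ∈ N := (mem_fixingSubgroup_iff _).2 fun z hz ↦ notMem_support.1 hz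
  have hgN : g⁻¹ * c * g ∈ N := (mem_fixingSubgroup_iff _).2 fun z hz ↦ by
    have hσz : c (σ z) = σ z := notMem_support.1 <|
      mt (mem_support_iff_of_commute hσ.commute z).1 hz
    rw [Perm.smul_def, mul_apply, mul_apply, hg hz, hσz, Perm.inv_eq_iff_eq, hg hz]
  -- Frattini argument: `⟨c⟩` and `g⁻¹ ⟨c⟩ g` are Sylow subgroups of `G ⊓ N`, hence conjugate in it.
  obtain ⟨k, ⟨hkG, hkN⟩, hk⟩ := exists_mem_zpowers_conj_eq_of_not_sq_dvd_card hprime hN ⟨hcG, hcN⟩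
    ⟨G.mul_mem (G.mul_mem (G.inv_mem hgG) hcG) hgG, hgN⟩ hcyc.orderOf
    (by simpa [hcyc.orderOf] using (MulAut.conj g⁻¹).orderOf_eq c)
  refine ⟨g * k⁻¹, G.mul_mem hgG (G.inv_mem hkG), inv_mem_iff.1 ?_, fun z hz ↦ ?_⟩
  · rw [Subgroup.mem_normalizer_iff_map_conj_eq, MonoidHom.map_zpowers]
    convert! hk using 2
  · have hkz : k⁻¹ z = z := (mem_fixingSubgroup_iff _).1 (N.inv_mem hkN) z hz
    rw [mul_apply, hkz, hg hz]

theorem isThreeCycle_commutatorElement_swap {a b c : α} (hab : a ≠ b) (hac : a ≠ c)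
    (hbc : b ≠ c) : (⁅swap a b, swap a c⁆ : Perm α).IsThreeCycle := by
  simpa [commutatorElement_def, mul_assoc] using!
    (isThreeCycle_swap_mul_swap_same hab hac hbc).isThreeCycle_sq

theorem exists_isThreeCycle_mem_of_isMultiplyPretransitive (hprime : (#c.support).Prime)
    (hcyc : c.IsCycle) (hcG : c ∈ G)
    (hG : IsMultiplyPretransitive G α (c.support : Set α)ᶜ.ncard)
    (hcard : #c.support + 2 < Fintype.card α) : ∃ d ∈ G, d.IsThreeCycle := by
  have hfix : 2 < #c.supportᶜ := by rw [Finset.card_compl]; omega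
  obtain ⟨u, v, w, hu, hv, hw, huv, huw, hvw⟩ := Finset.two_lt_card_iff.1 hfix
  simp only [Finset.mem_compl, notMem_support] at hu hv hw
  have swap_disjoint {i j : α} (hi : c i = i) (hj : c j = j) : (swap i j).Disjoint c := by
    intro z
    grind
  have hσ := swap_disjoint hu hv
  have hτ := swap_disjoint hu hw
  obtain ⟨s, hsG, hsN, hsσ⟩ := exists_mem_normalizer_zpowers_eqOn hprime hcyc hcG hG hσ
  obtain ⟨t, htG, htN, htτ⟩ := exists_mem_normalizer_zpowers_eqOn hprime hcyc hcG hG hτ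
  have hcomm : Commute ⁅s, t⁆ c :=
    (Subgroup.mem_centralizer_iff.1 (commutatorElement_mem_centralizer_of_mem_normalizer hsN htN) c
      (Subgroup.mem_zpowers c)).symm
  have hdis : (⁅swap u v, swap u w⁆ : Perm α).Disjoint c :=
    ((hσ.mul_left hτ).mul_left hσ.inv_left).mul_left hτ.inv_left
  have heq : Set.EqOn (⁅s, t⁆ : Perm α) (⁅swap u v, swap u w⁆ : Perm α) (c.support : Set α)ᶜ :=
    eqOn_commutatorElement hsσ htτ (fun z ↦ (mem_support_iff_of_commute hσ.commute z).not)
      (fun z ↦ (mem_support_iff_of_commute hτ.commute z).not)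
  have hst : ⁅s, t⁆ ∈ G := G.mul_mem (G.mul_mem (G.mul_mem hsG htG) (G.inv_mem hsG)) (G.inv_mem htG)
  have hmem : (⁅swap u v, swap u w⁆ : Perm α)⁻¹ * ⁅s, t⁆ ∈ G :=
    (Subgroup.zpowers_le.2 hcG) (inv_mul_mem_zpowers_of_commute hcyc hcomm hdis heq)
  exact ⟨_, inv_mem_iff.1 ((G.mul_mem_cancel_right hst).1 hmem),
    isThreeCycle_commutatorElement_swap huv huw hvw⟩

variable (G c) in
theorem card_ofFixingSubgroup_compl_support :
    Nat.card (SubMulAction.ofFixingSubgroup G (c.support : Set α)ᶜ) = #c.support := by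
  change Nat.card ((c.support : Set α)ᶜᶜ : Set α) = _
  rw [compl_compl, Nat.card_coe_set_eq, Set.ncard_coe_finset]

theorem isPreprimitive_ofFixingSubgroup_of_isCycle_mem (hprime : (#c.support).Prime)
    (hcyc : c.IsCycle) (hcG : c ∈ G) :
    IsPreprimitive (fixingSubgroup G (c.support : Set α)ᶜ)
      (SubMulAction.ofFixingSubgroup G (c.support : Set α)ᶜ) :=
  have := isPretransitive_of_isCycle_mem hcyc hcG
  IsPreprimitive.of_prime_card ((card_ofFixingSubgroup_compl_support G c).symm ▸ hprime)

theorem isPreprimitive_of_isCycle_mem [IsPretransitive G α] (hprime : (#c.support).Prime)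
    (hcyc : c.IsCycle) (hcG : c ∈ G) (hcard : Fintype.card α < 2 * #c.support) :
    IsPreprimitive G α := by
  have := isPreprimitive_ofFixingSubgroup_of_isCycle_mem hprime hcyc hcG
  apply IsPreprimitive.of_card_lt
    (f := SubMulAction.ofFixingSubgroup_equivariantMap G (c.support : Set α)ᶜ)
  rwa [Set.ncard_range_of_injective SubMulAction.ofFixingSubgroup_equivariantMap_injective,
    card_ofFixingSubgroup_compl_support, Nat.card_eq_fintype_card]

theorem isMultiplyPretransitive_of_isCycle_mem (hG : IsPreprimitive G α)
    (hprime : (#c.support).Prime) (hcyc : c.IsCycle) (hcG : c ∈ G)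
    (hcard : #c.support < Fintype.card α) :
    IsMultiplyPretransitive G α (c.support : Set α)ᶜ.ncard := by
  have hncard : #c.support + (c.support : Set α)ᶜ.ncard = Nat.card α := by
    rw [← Set.ncard_coe_finset, Set.ncard_add_ncard_compl]
  rw [← Nat.card_eq_fintype_card] at hcard
  obtain ⟨m, hm⟩ : ∃ m, (c.support : Set α)ᶜ.ncard = m + 1 := Nat.exists_eq_add_one.2 (by omega)
  have hle := hprime.two_le
  have := (hG.isMultiplyPreprimitive hm (by omega)
    (isPreprimitive_ofFixingSubgroup_of_isCycle_mem hprime hcyc hcG)).isMultiplyPretransitive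
  exact isMultiplyPretransitive_of_le (n := m + 2) (by omega) (by omega)

theorem alternatingGroup_le_of_isPreprimitive_of_isCycle_mem (hG : IsPreprimitive G α)
    (hprime : (#c.support).Prime) (hcyc : c.IsCycle) (hcG : c ∈ G)
    (hcard : #c.support + 2 < Fintype.card α) : alternatingGroup α ≤ G := by
  have htrans := isMultiplyPretransitive_of_isCycle_mem hG hprime hcyc hcG (by omega)
  obtain ⟨d, hdG, hd⟩ :=
    exists_isThreeCycle_mem_of_isMultiplyPretransitive hprime hcyc hcG htrans hcard
  exact alternatingGroup_le_of_isPreprimitive_of_isThreeCycle_mem hG hd hdG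

theorem isPretransitive_of_forall_exists_mem_support (hcyc : c.IsCycle) (hcG : c ∈ G)
    (hG : ∀ u, ∃ g ∈ G, g u ∈ c.support) : IsPretransitive G α := by
  obtain ⟨a, ha⟩ := hcyc.nonempty_support
  refine (isPretransitive_iff_base a).2 fun u ↦ ?_
  obtain ⟨g, hgG, hgu⟩ := hG u
  obtain ⟨i, hi⟩ := hcyc.sameCycle (mem_support.1 ha) (mem_support.1 hgu)
  refine ⟨⟨g⁻¹ * c ^ i, G.mul_mem (G.inv_mem hgG) (G.zpow_mem hcG i)⟩, ?_⟩
  change (g⁻¹ * c ^ i) a = u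
  rw [mul_apply, hi, Perm.inv_eq_iff_eq]

theorem isPretransitive_of_isCycle_mem_of_cycleType {x : Perm α} (hxG : x ∈ G)
    (hcyc : c.IsCycle) (hcG : c ∈ G) (hsum : x.cycleType.sum = Fintype.card α)
    (hx : ∀ l ∈ x.cycleType, Fintype.card α < #c.support + l) : IsPretransitive G α := by
  refine isPretransitive_of_forall_exists_mem_support hcyc hcG fun u ↦ ?_
  have hu : u ∈ x.support := by
    rw [Finset.eq_univ_of_card _ (x.sum_cycleType.symm.trans hsum)]
    exact Finset.mem_univ u
  have hlong : #(x.cycleOf u).support ∈ x.cycleType := by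
    rw [cycleType_def]
    exact Multiset.mem_map_of_mem _ (cycleOf_mem_cycleFactorsFinset_iff.2 hu)
  obtain ⟨v, hv⟩ := Finset.inter_nonempty_of_card_lt_card_add_card (Finset.subset_univ c.support)
    (Finset.subset_univ (x.cycleOf u).support) (hx _ hlong)
  rw [Finset.mem_inter, mem_support_cycleOf_iff] at hv
  obtain ⟨hvc, ⟨i, rfl⟩, -⟩ := hv
  exact ⟨x ^ i, G.zpow_mem hxG i, hvc⟩

theorem alternatingGroup_le_of_orderOf_prime_of_cycleType {p : ℕ} (hp : p.Prime)
    (hp1 : Fintype.card α < 2 * p) (hp2 : p + 2 < Fintype.card α) {x y : Perm α} (hxG : x ∈ G)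
    (hyG : y ∈ G) (hy : orderOf y = p) (hsum : x.cycleType.sum = Fintype.card α)
    (hx : ∀ l ∈ x.cycleType, Fintype.card α < p + l) : alternatingGroup α ≤ G := by
  have hcyc : y.IsCycle := isCycle_of_prime_order' (hy ▸ hp) (hy ▸ hp1)
  obtain rfl : #y.support = p := hcyc.orderOf.symm.trans hy
  have := isPretransitive_of_isCycle_mem_of_cycleType hxG hcyc hyG hsum hx
  have hprim := isPreprimitive_of_isCycle_mem hp hcyc hyG hp1
  exact alternatingGroup_le_of_isPreprimitive_of_isCycle_mem hprim hp hcyc hyG hp2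

theorem alternating_invariable_generation_ncycle_prime_general {p : ℕ} (hp : p.Prime)
    (hp1 : Fintype.card α < 2 * p) (hp2 : p + 2 < Fintype.card α) {x y : Perm α}
    (hy : orderOf y = p) (hsum : x.cycleType.sum = Fintype.card α)
    (hx : ∀ l ∈ x.cycleType, Fintype.card α < p + l) (g h : Perm α) :
    alternatingGroup α ≤ Subgroup.closure {g⁻¹ * x * g, h⁻¹ * y * h} := by
  have hxg : (g⁻¹ * x * g).cycleType = x.cycleType := by simpa using cycleType_conj (τ := g⁻¹)
  refine alternatingGroup_le_of_orderOf_prime_of_cycleType hp hp1 hp2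
    (Subgroup.subset_closure (Set.mem_insert _ _))
    (Subgroup.subset_closure (Set.mem_insert_of_mem _ rfl)) ?_ (hxg ▸ hsum) (hxg ▸ hx)
  simpa [hy] using (MulAut.conj h⁻¹).orderOf_eq y

theorem sum_eq_and_forall_le_two_mul {n : ℕ} {m : Multiset ℕ} (hodd : Odd n → m = {n})
    (heven : Even n → m = {n / 2, n / 2}) : m.sum = n ∧ ∀ l ∈ m, n ≤ 2 * l := by
  rcases n.even_or_odd with hn | hn
  · obtain ⟨k, rfl⟩ := id hn
    have hk : (k + k) / 2 = k := by omega
    simp [heven hn, hk, two_mul]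
  · simp [hodd hn, two_mul]

end

/-- For `n > 7`, a prime `p` with `n/2 < p < n - 2`, an element `y` of order `p` in `A_n`,
and `x ∈ A_n` an `n`-cycle (for odd `n`) or a product of two disjoint `n/2`-cycles
(for even `n`), the elements `x` and `y` generate `A_n` invariably. -/
theorem alternating_invariable_generation_ncycle_prime
    (n p : ℕ) (hn : 7 < n) (hp : p.Prime) (hp1 : n < 2 * p) (hp2 : p < n - 2)
    (x y : alternatingGroup (Fin n))
    (hy : orderOf y = p)
    (hxodd : Odd n → (x : Equiv.Perm (Fin n)).cycleType = {n})
    (hxeven : Even n → (x : Equiv.Perm (Fin n)).cycleType = {n / 2, n / 2}) :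
    ∀ g h : alternatingGroup (Fin n),
      Subgroup.closure {g⁻¹ * x * g, h⁻¹ * y * h} = ⊤ := by
  intro g h
  obtain ⟨hsum, hhalf⟩ := sum_eq_and_forall_le_two_mul hxodd hxeven
  have hlong (l) (hl : l ∈ (x : Equiv.Perm (Fin n)).cycleType) : n < p + l := by
    have := hhalf l hl
    omega
  refine closure_eq_top_of_le_closure_image ?_
  rw [Set.image_pair]
  have hle := alternating_invariable_generation_ncycle_prime_general
    (x := (x : Equiv.Perm (Fin n))) (y := y) hp (by rwa [Fintype.card_fin])
    (by rw [Fintype.card_fin]; omega) (by rwa [Subgroup.orderOf_coe])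
    (by rwa [Fintype.card_fin]) (by rwa [Fintype.card_fin]) g h
  exact hle
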